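/- Dice mutual-information identity: let P be a bipartite non-signaling device over finite sets A, B, X, Y, and let D1 and D2 be probability distributions on X and Y respectively. Define the probability distribution R on (A x X) x (B x Y) by R(a,x,b,y) := D1(x) * D2(y) * P(a,b|x,y). Then I(AX : BY)_R = I(A : B | X Y)_R = sum over (x,y) of D1(x) * D2(y) * I(A:B)_{P(.,.|x,y)}; in particular the non-signaling conditions imply I(X : B | Y)_R = 0 and I(A : Y | X)_R = 0. -/

import Mathlib

/-- Shannon entropy (base-2) of a finitely supported real-valued distribution. -/
noncomputable def shannonEnt {α : Type} [Fintype α] (p : α → ℝ) : ℝ :=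
  -∑ a, p a * Real.logb 2 (p a)

/-- Shannon mutual information (base-2) of a joint distribution on `α × β`. -/
noncomputable def mutInfo {α β : Type} [Fintype α] [Fintype β] (R : α → β → ℝ) : ℝ :=
  shannonEnt (fun a => ∑ b, R a b) + shannonEnt (fun b => ∑ a, R a b) -
    shannonEnt (fun p : α × β => R p.1 p.2)

/-- The binary Shannon entropy `h(ε) = -ε log₂ ε - (1-ε) log₂ (1-ε)` (with `h(0)=0`). -/
noncomputable def binEnt (x : ℝ) : ℝ :=
  -(x * Real.logb 2 x) - (1 - x) * Real.logb 2 (1 - x)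

/-- Conditional Shannon mutual information (base-2) `I(A:B|C)` of a joint distribution
on `α × β × γ`, conditioning on the third coordinate:
`I(A:B|C) = H(A,C) + H(B,C) - H(A,B,C) - H(C)`. -/
noncomputable def condMutInfo {α β γ : Type} [Fintype α] [Fintype β] [Fintype γ]
    (R : α → β → γ → ℝ) : ℝ :=
  shannonEnt (fun p : α × γ => ∑ b, R p.1 b p.2) +
    shannonEnt (fun p : β × γ => ∑ a, R a p.1 p.2) -
    shannonEnt (fun p : α × β × γ => R p.1 p.2.1 p.2.2) -
    shannonEnt (fun c : γ => ∑ a, ∑ b, R a b c)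

/-- A bipartite non-signaling device over finite output sets `A`, `B` and input
sets `X`, `Y`. -/
def IsDevice {A B X Y : Type} [Fintype A] [Fintype B] (P : A → B → X → Y → ℝ) : Prop :=
  (∀ a b x y, 0 ≤ P a b x y) ∧
  (∀ x y, ∑ a, ∑ b, P a b x y = 1) ∧
  (∀ a x y y', ∑ b, P a b x y = ∑ b, P a b x y') ∧
  (∀ b y x x', ∑ a, P a b x y = ∑ a, P a b x' y)

/-! For every joint distribution of `A, B, X, Y` the chain rule gives
`I(AX:BY) = I(A:B|XY) + I(A:Y|X) + I(X:B|Y) + I(X:Y)`. No-signaling makes `A` independent of `Y`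
given `X`, and `B` independent of `X` given `Y`; the dice make `X` and `Y` independent. So the last
three terms vanish. -/

section Entropy

variable {α β γ : Type} [Fintype α] [Fintype β] [Fintype γ]

theorem shannonEnt_eq_sum_negMulLog_div (p : α → ℝ) :
    shannonEnt p = (∑ a, Real.negMulLog (p a)) / Real.log 2 := by
  simp only [shannonEnt, Real.negMulLog, Real.logb, neg_mul, Finset.sum_neg_distrib, neg_div,
    Finset.sum_div, mul_div_assoc]

theorem shannonEnt_comp_equiv (e : α ≃ β) (p : β → ℝ) :
    shannonEnt (fun a => p (e a)) = shannonEnt p :=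
  congrArg Neg.neg (e.sum_comp fun b => p b * Real.logb 2 (p b))

theorem shannonEnt_chain_rule (w : γ → ℝ) (f : γ → α → ℝ) (hf : ∀ c, ∑ a, f c a = 1) :
    shannonEnt (fun p : α × γ => w p.2 * f p.2 p.1) =
      shannonEnt w + ∑ c, w c * shannonEnt (f c) := by
  simp only [shannonEnt_eq_sum_negMulLog_div, Fintype.sum_prod_type_right, Real.negMulLog_mul,
    Finset.sum_add_distrib, ← Finset.sum_mul, ← Finset.mul_sum, hf, one_mul, add_div,
    ← mul_div_assoc, ← Finset.sum_div]

theorem shannonEnt_mul (u : α → ℝ) (v : β → ℝ) (hu : ∑ a, u a = 1) (hv : ∑ b, v b = 1) :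
    shannonEnt (fun p : α × β => u p.1 * v p.2) = shannonEnt u + shannonEnt v := by
  simp only [mul_comm (u _), shannonEnt_chain_rule v (fun _ => u) (fun _ => hu),
    ← Finset.sum_mul, hv, one_mul, add_comm]

end Entropy

section MutualInformation

variable {α β γ : Type} [Fintype α] [Fintype β] [Fintype γ]

theorem mutInfo_mul_eq_zero (u : α → ℝ) (v : β → ℝ) (hu : ∑ a, u a = 1) (hv : ∑ b, v b = 1) :
    mutInfo (fun a b => u a * v b) = 0 := by
  simp only [mutInfo, ← Finset.mul_sum, ← Finset.sum_mul, hu, hv, mul_one, one_mul,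
    shannonEnt_mul u v hu hv, sub_self]

theorem condMutInfo_mul_eq_sum_mul_mutInfo (w : γ → ℝ) (K : γ → α → β → ℝ)
    (hK : ∀ c, ∑ a, ∑ b, K c a b = 1) :
    condMutInfo (fun a b c => w c * K c a b) = ∑ c, w c * mutInfo (K c) := by
  have hleft := shannonEnt_chain_rule w (fun c a => ∑ b, K c a b) hK
  have hright := shannonEnt_chain_rule w (fun c b => ∑ a, K c a b) fun c => by
    rw [Finset.sum_comm, hK]
  have hjoint : shannonEnt (fun p : α × β × γ => w p.2.2 * K p.2.2 p.1 p.2.1) =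
      shannonEnt w + ∑ c, w c * shannonEnt (fun p : α × β => K c p.1 p.2) := by
    rw [← shannonEnt_chain_rule w (fun c (p : α × β) => K c p.1 p.2) fun c => by
      rw [Fintype.sum_prod_type, hK]]
    exact shannonEnt_comp_equiv (Equiv.prodAssoc α β γ).symm
      (fun p : (α × β) × γ => w p.2 * K p.2 p.1.1 p.1.2)
  simp only [condMutInfo, mutInfo, ← Finset.mul_sum, hK, mul_one, hleft, hright, hjoint, mul_sub,
    mul_add, Finset.sum_add_distrib, Finset.sum_sub_distrib]
  ring

theorem condMutInfo_mul_mul_eq_zero (w : γ → ℝ) (u : γ → α → ℝ) (v : γ → β → ℝ)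
    (hu : ∀ c, ∑ a, u c a = 1) (hv : ∀ c, ∑ b, v c b = 1) :
    condMutInfo (fun a b c => w c * (u c a * v c b)) = 0 := by
  rw [condMutInfo_mul_eq_sum_mul_mutInfo w (fun c a b => u c a * v c b) fun c => by
    simp only [← Finset.mul_sum, hv, mul_one, hu]]
  simp only [mutInfo_mul_eq_zero _ _ (hu _) (hv _), mul_zero, Finset.sum_const_zero]

theorem mutInfo_chain_rule {ξ η : Type} [Fintype ξ] [Fintype η] (R : α → β → ξ → η → ℝ) :
    mutInfo (fun (p : α × ξ) (q : β × η) => R p.1 q.1 p.2 q.2) =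
      condMutInfo (fun a b (z : ξ × η) => R a b z.1 z.2) +
        condMutInfo (fun a y x => ∑ b, R a b x y) +
        condMutInfo (fun x b y => ∑ a, R a b x y) +
        mutInfo (fun x y => ∑ a, ∑ b, R a b x y) := by
  have hABXY : shannonEnt (fun p : (α × ξ) × β × η => R p.1.1 p.2.1 p.1.2 p.2.2) =
      shannonEnt (fun p : α × β × ξ × η => R p.1 p.2.1 p.2.2.1 p.2.2.2) := by
    rw [← shannonEnt_comp_equiv (Equiv.prodAssoc α β (ξ × η)),
      ← shannonEnt_comp_equiv (Equiv.prodProdProdComm α ξ β η)]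
    rfl
  have hAXY : shannonEnt (fun p : α × η × ξ => ∑ b, R p.1 b p.2.2 p.2.1) =
      shannonEnt (fun p : α × ξ × η => ∑ b, R p.1 b p.2.1 p.2.2) :=
    shannonEnt_comp_equiv ((Equiv.refl α).prodCongr (Equiv.prodComm η ξ))
      (fun p : α × ξ × η => ∑ b, R p.1 b p.2.1 p.2.2)
  have hBXY : shannonEnt (fun p : ξ × β × η => ∑ a, R a p.2.1 p.1 p.2.2) =
      shannonEnt (fun p : β × ξ × η => ∑ a, R a p.1 p.2.1 p.2.2) :=
    shannonEnt_comp_equiv ((Equiv.prodAssoc ξ β η).symm.trans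
      (((Equiv.prodComm ξ β).prodCongr (Equiv.refl η)).trans (Equiv.prodAssoc β ξ η)))
      (fun p : β × ξ × η => ∑ a, R a p.1 p.2.1 p.2.2)
  have hXY : shannonEnt (fun p : η × ξ => ∑ a, ∑ b, R a b p.2 p.1) =
      shannonEnt (fun p : ξ × η => ∑ a, ∑ b, R a b p.1 p.2) :=
    shannonEnt_comp_equiv (Equiv.prodComm η ξ) (fun p : ξ × η => ∑ a, ∑ b, R a b p.1 p.2)
  have hX (x : ξ) : ∑ a, ∑ y, ∑ b, R a b x y = ∑ y, ∑ a, ∑ b, R a b x y := Finset.sum_comm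
  have hBA (x : ξ) (y : η) : ∑ b, ∑ a, R a b x y = ∑ a, ∑ b, R a b x y := Finset.sum_comm
  simp only [mutInfo, condMutInfo, Fintype.sum_prod_type_right, hABXY, hAXY, hBXY, hXY, hX, hBA]
  ring

end MutualInformation

namespace IsDevice

variable {A B X Y : Type} [Fintype A] [Fintype B] [Fintype X] [Fintype Y]
  {P : A → B → X → Y → ℝ}

theorem condMutInfo_inputLeft_outputRight_eq_zero (hP : IsDevice P) {D1 : X → ℝ}
    (hD1 : ∑ x, D1 x = 1) (D2 : Y → ℝ) :
    condMutInfo (fun x b y => ∑ a, D1 x * D2 y * P a b x y) = 0 := by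
  obtain ⟨-, hsum, -, hB⟩ := hP
  obtain ⟨x₀⟩ : Nonempty X :=
    Finset.univ_nonempty_iff.mp (Finset.nonempty_of_sum_ne_zero (hD1.trans_ne one_ne_zero))
  have hfactor (x b y) : ∑ a, D1 x * D2 y * P a b x y = D2 y * (D1 x * ∑ a, P a b x₀ y) := by
    rw [← Finset.mul_sum, hB b y x x₀]
    ring
  simp only [hfactor]
  exact condMutInfo_mul_mul_eq_zero D2 (fun _ => D1) (fun y b => ∑ a, P a b x₀ y) (fun _ => hD1)
    fun y => by rw [Finset.sum_comm, hsum]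

theorem condMutInfo_outputLeft_inputRight_eq_zero (hP : IsDevice P) (D1 : X → ℝ) {D2 : Y → ℝ}
    (hD2 : ∑ y, D2 y = 1) :
    condMutInfo (fun a y x => ∑ b, D1 x * D2 y * P a b x y) = 0 := by
  obtain ⟨-, hsum, hA, -⟩ := hP
  obtain ⟨y₀⟩ : Nonempty Y :=
    Finset.univ_nonempty_iff.mp (Finset.nonempty_of_sum_ne_zero (hD2.trans_ne one_ne_zero))
  have hfactor (a y x) : ∑ b, D1 x * D2 y * P a b x y = D1 x * ((∑ b, P a b x y₀) * D2 y) := by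
    rw [← Finset.mul_sum, hA a x y y₀]
    ring
  simp only [hfactor]
  exact condMutInfo_mul_mul_eq_zero D1 (fun x a => ∑ b, P a b x y₀) (fun _ => D2)
    (fun x => hsum x y₀) fun _ => hD2

end IsDevice

/-- Dice mutual-information identity: feeding independent local dice `D1`, `D2` into the
inputs of a non-signaling device `P` yields a joint distribution `R` on `(A×X) × (B×Y)`
with `I(AX:BY)_R = I(A:B|XY)_R = ∑_{x,y} D1(x) D2(y) I(A:B)_{P(·,·|x,y)}`; in particular
the non-signaling conditions imply `I(X:B|Y)_R = 0` and `I(A:Y|X)_R = 0`. -/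
theorem dice_mutual_information_identity {A B X Y : Type}
    [Fintype A] [Fintype B] [Fintype X] [Fintype Y]
    (P : A → B → X → Y → ℝ) (hP : IsDevice P)
    (D1 : X → ℝ) (hD1nonneg : ∀ x, 0 ≤ D1 x) (hD1sum : ∑ x, D1 x = 1)
    (D2 : Y → ℝ) (hD2nonneg : ∀ y, 0 ≤ D2 y) (hD2sum : ∑ y, D2 y = 1) :
    mutInfo (fun (p : A × X) (q : B × Y) => D1 p.2 * D2 q.2 * P p.1 q.1 p.2 q.2) =
        condMutInfo (fun a b (xy : X × Y) => D1 xy.1 * D2 xy.2 * P a b xy.1 xy.2) ∧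
      condMutInfo (fun a b (xy : X × Y) => D1 xy.1 * D2 xy.2 * P a b xy.1 xy.2) =
        ∑ x, ∑ y, D1 x * D2 y * mutInfo (fun a b => P a b x y) ∧
      condMutInfo (fun x b (y : Y) => ∑ a, D1 x * D2 y * P a b x y) = 0 ∧
      condMutInfo (fun a y (x : X) => ∑ b, D1 x * D2 y * P a b x y) = 0 := by
  have hsum := hP.2.1
  have hXB := hP.condMutInfo_inputLeft_outputRight_eq_zero hD1sum D2
  have hAY := hP.condMutInfo_outputLeft_inputRight_eq_zero D1 hD2sum
  have hXY : mutInfo (fun x y => ∑ a, ∑ b, D1 x * D2 y * P a b x y) = 0 := by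
    simpa only [← Finset.mul_sum, hsum, mul_one] using mutInfo_mul_eq_zero D1 D2 hD1sum hD2sum
  refine ⟨?_, ?_, hXB, hAY⟩
  · simp only [mutInfo_chain_rule fun a b x y => D1 x * D2 y * P a b x y, hAY, hXB, hXY, add_zero]
  · rw [condMutInfo_mul_eq_sum_mul_mutInfo (fun xy : X × Y => D1 xy.1 * D2 xy.2)
      (fun xy a b => P a b xy.1 xy.2) fun xy => hsum xy.1 xy.2, Fintype.sum_prod_type]
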